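/- Let X and Y be simplicial complexes on the same finite vertex set V. Then L_Y(X;F) = min{d : h̃_i(lk(X,σ);F) = 0 for all i ≥ d and all σ ∈ Y}, where for σ ∉ X the link lk(X,σ) is the void complex (whose reduced homology vanishes in all degrees). -/

import Mathlib

open Finset

/-- An abstract simplicial complex on the vertex type `V`: a set of finite subsets
("simplices") closed under taking subsets. -/
def IsComplex {V : Type*} (X : Set (Finset V)) : Prop :=
  ∀ σ ∈ X, ∀ τ, τ ⊆ σ → τ ∈ X

variable {V : Type*}

/-- The induced subcomplex `X[S] = {σ ∈ X : σ ⊆ S}`. -/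
def induce (X : Set (Finset V)) (S : Finset V) : Set (Finset V) :=
  {σ | σ ∈ X ∧ σ ⊆ S}

/-- The link `lk(X,τ) = {σ : σ ∪ τ ∈ X, σ ∩ τ = ∅}`; it is the void complex if `τ ∉ X`. -/
def link [DecidableEq V] (X : Set (Finset V)) (τ : Finset V) : Set (Finset V) :=
  {σ | σ ∪ τ ∈ X ∧ Disjoint σ τ}

/-- The star `str(X,τ) = {σ ∈ X : σ ∪ τ ∈ X}`. -/
def star [DecidableEq V] (X : Set (Finset V)) (τ : Finset V) : Set (Finset V) :=
  {σ | σ ∈ X ∧ σ ∪ τ ∈ X}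

/-- The Alexander dual `X^∨ = {A ⊆ V : V \ A ∉ X}` of a complex on the finite vertex set
`V`. -/
def alexDual [Fintype V] [DecidableEq V] (X : Set (Finset V)) : Set (Finset V) :=
  {A | Aᶜ ∉ X}

section Homology

variable (F : Type) [Field F]

/-- The faces of `X` of cardinality `n` (i.e. of dimension `n-1`). -/
def Face (X : Set (Finset V)) (n : ℕ) : Type _ :=
  {σ : Finset V // σ ∈ X ∧ σ.card = n}

/-- Simplicial chains in dimension `n-1`: formal `F`-linear combinations of faces of
cardinality `n`.  Since the empty face spans the degree `n = 0` part, this yields the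
*augmented* simplicial chain complex of `X`. -/
def SChain (X : Set (Finset V)) (n : ℕ) : Type _ := Face X n →₀ F

noncomputable instance (X : Set (Finset V)) (n : ℕ) : AddCommGroup (SChain F X n) :=
  Finsupp.instAddCommGroup

noncomputable instance (X : Set (Finset V)) (n : ℕ) : Module F (SChain F X n) :=
  Finsupp.module (Face X n) F

variable [LinearOrder V]

open Classical in
/-- The boundary of a face of cardinality `n+1`: the alternating sum of its codimension-one
subfaces, with signs determined by the linear order on the vertices. -/
noncomputable def bdryElem (X : Set (Finset V)) (n : ℕ) (σ : Face X (n+1)) :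
    SChain F X n :=
  ∑ x ∈ σ.1.attach,
    if h : σ.1.erase ↑x ∈ X then
      ((-1 : F) ^ ((σ.1.filter (fun y => y < (x : V))).card)) •
        (Finsupp.single (⟨σ.1.erase ↑x, h, by
          rw [Finset.card_erase_of_mem x.2, σ.2.2]; rfl⟩ : Face X n) 1 : SChain F X n)
    else 0

/-- The simplicial boundary map (in degree `0` it is the augmentation `C_0 → C_{-1} ≅ F`
encoded by `scyc`). -/
noncomputable def sbdry (X : Set (Finset V)) (n : ℕ) :
    SChain F X (n+1) →ₗ[F] SChain F X n :=
  Finsupp.lsum F fun σ => LinearMap.toSpanSingleton F (SChain F X n) (bdryElem F X n σ)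

/-- The cycles of the augmented simplicial chain complex. -/
noncomputable def scyc (X : Set (Finset V)) : (n : ℕ) → Submodule F (SChain F X n)
  | 0 => ⊤
  | (n+1) => LinearMap.ker (sbdry F X n)

/-- `RH F X n` is the reduced simplicial homology `h̃_{n-1}(X; F)` of `X` with coefficients
in `F` (faces of cardinality `n` have dimension `n-1`). -/
abbrev RH (X : Set (Finset V)) (n : ℕ) : Type _ :=
  scyc F X n ⧸ Submodule.comap (scyc F X n).subtype (LinearMap.range (sbdry F X n))

/-- `X` is `d`-Leray over `F`: every induced subcomplex has vanishing reduced homology in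
all dimensions `i ≥ d`. -/
def IsLeray (d : ℕ) (X : Set (Finset V)) : Prop :=
  ∀ S : Finset V, ∀ i : ℕ, d ≤ i → Subsingleton (RH F (induce X S) (i+1))

end Homology


/-- The relative Leray number `L_Y(X; F)`: the least `d` such that
`h̃_i(X[V \ σ]; F) = 0` for all `i ≥ d` and all `σ ∈ Y`. -/
noncomputable def relLeray {V : Type*} [Fintype V] [LinearOrder V] (F : Type) [Field F]
    (X Y : Set (Finset V)) : ℕ :=
  sInf {d | ∀ σ ∈ Y, ∀ i : ℕ, d ≤ i → Subsingleton (RH F (induce X σᶜ) (i + 1))}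

section Aux

set_option linter.unusedSectionVars false

variable {V : Type} [Fintype V] [LinearOrder V] (F : Type) [Field F]

/-- Sign of `x` relative to `t`. -/
def sg (x : V) (t : Finset V) : F := (-1 : F) ^ ((t.filter (fun y => y < x)).card)

lemma sg_sq (x : V) (t : Finset V) : sg F x t * sg F x t = 1 := by
  unfold sg
  rw [← mul_pow]; simp

lemma sg_insert (x v : V) (t : Finset V) (hv : v ∉ t) :
    sg F x (insert v t) = (if v < x then -1 else 1) * sg F x t := by
  unfold sg
  rw [Finset.filter_insert]
  split_ifs with h
  · rw [Finset.card_insert_of_notMem (by simp [hv]), pow_succ]; ring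
  · ring

lemma sg_swap (x v : V) (t : Finset V) (hv : v ∉ t) (hx : x ∉ t) (hxv : x ≠ v) :
    sg F x (insert v t) * sg F v (insert x t) = - (sg F v t * sg F x t) := by
  rw [sg_insert F x v t hv, sg_insert F v x t hx]
  rcases lt_or_gt_of_ne hxv with h | h
  · simp [h, not_lt_of_gt h]; ring
  · simp [h, not_lt_of_gt h]; ring

/-- Ungraded boundary operator. -/
def DD (g : Finset V → F) (t : Finset V) : F :=
  ∑ x : V, if x ∈ t then 0 else sg F x t * g (insert x t)

lemma DD_add (g h : Finset V → F) : DD F (g + h) = DD F g + DD F h := by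
  funext t
  simp only [DD, Pi.add_apply, ← Finset.sum_add_distrib]
  refine Finset.sum_congr rfl fun x _ => ?_
  split_ifs <;> ring

lemma DD_smul (c : F) (g : Finset V → F) : DD F (c • g) = c • DD F g := by
  funext t
  simp only [DD, Pi.smul_apply, smul_eq_mul, Finset.mul_sum]
  refine Finset.sum_congr rfl fun x _ => ?_
  split_ifs <;> ring

/-- The boundary as a linear map. -/
def DL : (Finset V → F) →ₗ[F] (Finset V → F) where
  toFun := DD F
  map_add' := DD_add F
  map_smul' := DD_smul F

/-- Cone operator. -/
def cone (v : V) (g : Finset V → F) (s : Finset V) : F :=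
  if v ∈ s then sg F v (s.erase v) * g (s.erase v) else 0

lemma DL_cone (v : V) (g : Finset V → F) (hg : ∀ s, v ∈ s → g s = 0) :
    DL F (cone F v g) = g - cone F v (DL F g) := by
  funext t
  show DD F (cone F v g) t = g t - cone F v (DD F g) t
  by_cases hv : v ∈ t
  · obtain ⟨r, hr, rfl⟩ : ∃ r, v ∉ r ∧ insert v r = t :=
      ⟨t.erase v, by simp, Finset.insert_erase hv⟩
    rw [hg _ hv]
    simp only [cone, DD, Finset.mem_insert_self, if_true, Finset.erase_insert hr, zero_sub,
      Finset.mul_sum, ← Finset.sum_neg_distrib]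
    refine Finset.sum_congr rfl fun x _ => ?_
    by_cases hx : x ∈ r
    · simp [hx]
    by_cases hxv : x = v
    · subst hxv
      simp [hr, hg]
    have e : (insert x (insert v r)).erase v = insert x r := by
      rw [Finset.insert_comm, Finset.erase_insert]
      simp [hr, Ne.symm hxv]
    simp only [Finset.mem_insert, hx, hxv, or_self, if_false, e, true_or, or_true, if_true]
    have := sg_swap F x v r hr hx hxv
    linear_combination g (insert x r) * this
  · simp only [cone, DD, hv, if_false, sub_zero]
    rw [Finset.sum_eq_single v]
    · simp only [hv, if_false, Finset.mem_insert_self, if_true, Finset.erase_insert hv]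
      rw [← mul_assoc, sg_sq, one_mul]
    · intro x _ hx
      simp [hv, Ne.symm hx]
    · simp

/-- Chains supported on the faces of `X` of cardinality `n`. -/
def Sup (X : Set (Finset V)) (n : ℕ) (g : Finset V → F) : Prop :=
  ∀ s, g s ≠ 0 → s ∈ X ∧ s.card = n

lemma Sup.add {X : Set (Finset V)} {n : ℕ} {g h : Finset V → F}
    (hg : Sup F X n g) (hh : Sup F X n h) : Sup F X n (g + h) := by
  intro s hs
  by_cases h0 : g s = 0
  · exact hh s (by simpa [h0] using hs)
  · exact hg s h0

lemma Sup.neg {X : Set (Finset V)} {n : ℕ} {g : Finset V → F}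
    (hg : Sup F X n g) : Sup F X n (-g) := by
  intro s hs
  exact hg s (by simpa using hs)

lemma Sup.mono {X Z : Set (Finset V)} {n : ℕ} {g : Finset V → F}
    (hg : Sup F X n g) (h : X ⊆ Z) : Sup F Z n g :=
  fun s hs => ⟨h (hg s hs).1, (hg s hs).2⟩

/-- Vanishing of homology, concretely. -/
def Van (X : Set (Finset V)) (n : ℕ) : Prop :=
  ∀ z, Sup F X n z → DL F z = 0 → ∃ w, Sup F X (n+1) w ∧ DL F w = z

/-- Embedding of chains. -/
noncomputable def Phi (X : Set (Finset V)) (n : ℕ) : SChain F X n →ₗ[F] (Finset V → F) :=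
  (Finsupp.lcoeFun : (Finset V →₀ F) →ₗ[F] (Finset V → F)) ∘ₗ
    (Finsupp.lmapDomain F F (fun s : Face X n => s.1))

lemma Phi_apply (X : Set (Finset V)) (n : ℕ) (f : Face X n →₀ F) (s : Finset V) :
    Phi F X n f s = Finsupp.mapDomain (fun s : Face X n => s.1) f s := rfl

lemma Phi_inj (X : Set (Finset V)) (n : ℕ) : Function.Injective (Phi F X n) := by
  intro f g h
  apply Finsupp.mapDomain_injective (f := fun s : Face X n => s.1) Subtype.val_injective
  exact DFunLike.coe_injective h

lemma Phi_sup (X : Set (Finset V)) (n : ℕ) (f : SChain F X n) : Sup F X n (Phi F X n f) := by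
  intro s hs
  by_contra hc
  apply hs
  refine (Phi_apply F X n f s).trans ?_
  apply Finsupp.mapDomain_of_notMem_range
  rintro ⟨a, rfl⟩
  exact hc a.2

lemma Phi_surj (X : Set (Finset V)) (n : ℕ) (g : Finset V → F) (hg : Sup F X n g) :
    ∃ f, Phi F X n f = g := by
  have : Finite (Face X n) := Subtype.finite
  refine ⟨Finsupp.equivFunOnFinite.symm (fun s : Face X n => g s.1), ?_⟩
  funext s
  rw [Phi_apply]
  by_cases hs : s ∈ X ∧ s.card = n
  · have := Finsupp.mapDomain_apply (f := fun s : Face X n => s.1) Subtype.val_injective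
      (Finsupp.equivFunOnFinite.symm (fun s : Face X n => g s.1)) ⟨s, hs⟩
    exact this
  · rw [Finsupp.mapDomain_of_notMem_range]
    · by_contra hc
      exact hs (hg s (Ne.symm hc))
    · rintro ⟨a, rfl⟩
      exact hs a.2

lemma Phi_single (X : Set (Finset V)) (n : ℕ) (a : Face X n) (c : F) :
    Phi F X n (Finsupp.single a c : Face X n →₀ F) = fun t => if a.1 = t then c else 0 := by
  funext t
  rw [Phi_apply, Finsupp.mapDomain_single, Finsupp.single_apply]

lemma Phi_smul_single (X : Set (Finset V)) (n : ℕ) (a : Face X n) (c : F) (t : Finset V) :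
    Phi F X n (c • (Finsupp.single a 1 : SChain F X n)) t = if a.1 = t then c else 0 := by
  have h := congrFun (Phi_single F X n a 1) t
  refine (congrFun ((Phi F X n).map_smul c (Finsupp.single a 1 : Face X n →₀ F)) t).trans ?_
  refine (congrArg (fun z => c • z) h).trans ?_
  simp

lemma Phi_bdryElem (X : Set (Finset V)) (hX : IsComplex X) (n : ℕ) (a : Face X (n+1)) :
    Phi F X n (bdryElem F X n a) = DL F (fun t => if a.1 = t then 1 else 0) := by
  funext t
  show _ = DD F (fun t => if a.1 = t then (1:F) else 0) t
  unfold bdryElem DD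
  rw [map_sum, Finset.sum_apply]
  have : ∀ x : V, (if x ∈ t then 0 else sg F x t * (if a.1 = insert x t then (1:F) else 0))
      = if x ∈ a.1 then (if a.1.erase x = t then sg F x (a.1.erase x) else 0) else 0 := by
    intro x
    by_cases h : x ∉ t ∧ a.1 = insert x t
    · obtain ⟨h1, h2⟩ := h
      simp [h1, h2]
    · have : ¬ (x ∈ a.1 ∧ a.1.erase x = t) := by
        rintro ⟨h1, rfl⟩
        exact h ⟨by simp, (Finset.insert_erase h1).symm⟩
      have l : (if x ∈ t then 0 else sg F x t * (if a.1 = insert x t then (1:F) else 0)) = 0 := by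
        split_ifs <;> simp_all
      rw [l]
      split_ifs <;> simp_all
  have hs : (∑ x : V, if x ∈ t then 0 else sg F x t * (if a.1 = insert x t then (1:F) else 0))
      = ∑ x : V, if x ∈ a.1 then (if a.1.erase x = t then sg F x (a.1.erase x) else 0) else 0 :=
    Finset.sum_congr rfl (fun x _ => this x)
  rw [hs, Finset.sum_ite_mem, Finset.univ_inter,
    ← Finset.sum_attach a.1 (fun x => if a.1.erase x = t then sg F x (a.1.erase x) else 0)]
  apply Finset.sum_congr rfl
  intro x _
  have hx : a.1.erase x.1 ∈ X := hX _ a.2.1 _ (Finset.erase_subset _ _)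
  refine (congrArg (fun c => Phi F X n c t) (dif_pos hx)).trans ?_
  refine (Phi_smul_single F X n _ _ t).trans ?_
  have e : sg F x.1 (a.1.erase x.1) = (-1 : F) ^ ((a.1.filter (fun y => y < (x : V))).card) := by
    unfold sg
    congr 2
    ext y
    simp only [Finset.mem_filter, Finset.mem_erase]
    constructor
    · rintro ⟨⟨_, h⟩, h'⟩; exact ⟨h, h'⟩
    · rintro ⟨h, h'⟩; exact ⟨⟨h'.ne, h⟩, h'⟩
  rw [e]

lemma Phi_sbdry (X : Set (Finset V)) (hX : IsComplex X) (n : ℕ) (f : SChain F X (n+1)) :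
    Phi F X n (sbdry F X n f) = DL F (Phi F X (n+1) f) := by
  have : (Phi F X n) ∘ₗ (sbdry F X n) = (DL F) ∘ₗ (Phi F X (n+1)) := by
    refine Finsupp.lhom_ext' fun a => ?_
    refine LinearMap.ext_ring ?_
    show Phi F X n (sbdry F X n (Finsupp.single a 1 : Face X (n+1) →₀ F)) =
      DL F (Phi F X (n+1) (Finsupp.single a 1 : Face X (n+1) →₀ F))
    rw [Phi_single, ← Phi_bdryElem F X hX]
    congr 1
    unfold sbdry
    have := Finsupp.lsum_single F (fun σ : Face X (n+1) =>
      LinearMap.toSpanSingleton F (SChain F X n) (bdryElem F X n σ)) a (1:F)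
    refine this.trans ?_
    simp
  exact LinearMap.congr_fun this f

lemma RH_iff (X : Set (Finset V)) (hX : IsComplex X) (n : ℕ) :
    Subsingleton (RH F X (n+1)) ↔ Van F X (n+1) := by
  rw [Submodule.Quotient.subsingleton_iff, Submodule.eq_top_iff']
  constructor
  · intro h z hz hz0
    obtain ⟨f, rfl⟩ := Phi_surj F X (n+1) z hz
    have hf : f ∈ scyc F X (n+1) := by
      show sbdry F X n f = 0
      apply Phi_inj F X n
      rw [Phi_sbdry F X hX, hz0, map_zero]
    obtain ⟨w, hw⟩ := h ⟨f, hf⟩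
    refine ⟨Phi F X (n+2) w, Phi_sup F X _ w, ?_⟩
    rw [← Phi_sbdry F X hX, hw]; rfl
  · rintro h ⟨f, hf⟩
    have hf' : sbdry F X n f = 0 := hf
    obtain ⟨w, hw, hw'⟩ := h (Phi F X (n+1) f) (Phi_sup F X _ f)
      (by rw [← Phi_sbdry F X hX, hf', map_zero])
    obtain ⟨g, rfl⟩ := Phi_surj F X (n+2) w hw
    refine ⟨g, ?_⟩
    apply Phi_inj F X (n+1)
    rw [Phi_sbdry F X hX, hw']; rfl

/-- Deletion of a vertex. -/
def del (K : Set (Finset V)) (v : V) : Set (Finset V) := {s | s ∈ K ∧ v ∉ s}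
/-- Link of a vertex. -/
def lkv (K : Set (Finset V)) (v : V) : Set (Finset V) := {s | insert v s ∈ K ∧ v ∉ s}

lemma lkv_sub (K : Set (Finset V)) (hK : IsComplex K) (v : V) : lkv K v ⊆ del K v :=
  fun s hs => ⟨hK _ hs.1 _ (Finset.subset_insert _ _), hs.2⟩

lemma del_sub (K : Set (Finset V)) (v : V) : del K v ⊆ K := fun _ hs => hs.1

lemma sup_cone {K : Set (Finset V)} {v : V} {n : ℕ} {g : Finset V → F}
    (hg : Sup F (lkv K v) n g) : Sup F K (n+1) (cone F v g) := by
  intro s hs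
  unfold cone at hs
  split_ifs at hs with h
  · have := hg _ (right_ne_zero_of_mul hs)
    refine ⟨?_, ?_⟩
    · have := this.1.1
      rwa [Finset.insert_erase h] at this
    · rw [← Finset.card_erase_add_one h, this.2]
  · exact absurd rfl hs

lemma sup_notMem {K : Set (Finset V)} {v : V} {n : ℕ} {g : Finset V → F}
    (hg : Sup F (del K v) n g) : ∀ s, v ∈ s → g s = 0 := by
  intro s hs
  by_contra h
  exact (hg s h).1.2 hs

lemma DL_notMem {v : V} {g : Finset V → F} (hg : ∀ s, v ∈ s → g s = 0) :
    ∀ s, v ∈ s → DL F g s = 0 := by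
  intro s hs
  show DD F g s = 0
  unfold DD
  refine Finset.sum_eq_zero fun x _ => ?_
  rw [hg (insert x s) (by simp [hs])]
  simp

lemma cone_inj {v : V} {g : Finset V → F} (hg : ∀ s, v ∈ s → g s = 0)
    (h : ∀ s, v ∈ s → cone F v g s = 0) : g = 0 := by
  funext s
  by_cases hs : v ∈ s
  · exact hg s hs
  · have := h (insert v s) (by simp)
    simp only [cone, Finset.mem_insert_self, if_true, Finset.erase_insert hs] at this
    have h2 := sg_sq F v s
    have : sg F v s * (sg F v s * g s) = 0 := by rw [this, mul_zero]
    rwa [← mul_assoc, h2, one_mul] at this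

lemma decomp {K : Set (Finset V)} (v : V) {n : ℕ} {u : Finset V → F}
    (hu : Sup F K (n+1) u) : ∃ u0 u1, Sup F (del K v) (n+1) u0 ∧ Sup F (lkv K v) n u1 ∧
      u = u0 + cone F v u1 := by
  refine ⟨fun s => if v ∈ s then 0 else u s,
    fun s => if v ∈ s then 0 else sg F v s * u (insert v s), ?_, ?_, ?_⟩
  · intro s hs
    dsimp only at hs
    split_ifs at hs with h
    · exact absurd rfl hs
    · exact ⟨⟨(hu s hs).1, h⟩, (hu s hs).2⟩
  · intro s hs
    dsimp only at hs
    split_ifs at hs with h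
    · exact absurd rfl hs
    · have := hu _ (right_ne_zero_of_mul hs)
      refine ⟨⟨this.1, h⟩, ?_⟩
      have h2 := this.2
      rw [Finset.card_insert_of_notMem h] at h2
      omega
  · funext s
    by_cases h : v ∈ s
    · simp [cone, h, Finset.insert_erase h, ← mul_assoc, sg_sq]
    · simp [cone, h]

lemma cone_add (v : V) (g h : Finset V → F) : cone F v (g + h) = cone F v g + cone F v h := by
  funext s
  simp only [cone, Pi.add_apply]
  split_ifs <;> ring

lemma van_link {K : Set (Finset V)} (hK : IsComplex K) (v : V) {n : ℕ}
    (h1 : Van F K (n+1)) (h2 : Van F (del K v) n) : Van F (lkv K v) n := by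
  intro z hz hz0
  have hzd := hz.mono F (lkv_sub K hK v)
  obtain ⟨w, hw, hwz⟩ := h2 z hzd hz0
  have hc0 : cone F v (0 : Finset V → F) = 0 := by funext s; simp [cone]
  have hcz : DL F (cone F v z) = z := by
    rw [DL_cone F v z (sup_notMem F hzd), hz0, hc0, sub_zero]
  obtain ⟨u, hu, huz⟩ := h1 (cone F v z + -w)
    ((sup_cone F hz).add F ((hw.mono F (del_sub K v)).neg F))
    (by rw [map_add, map_neg, hcz, hwz, add_neg_cancel])
  obtain ⟨u0, u1, hu0, hu1, rfl⟩ := decomp F v hu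
  have hu1d := sup_notMem F (hu1.mono F (lkv_sub K hK v))
  refine ⟨-u1, hu1.neg F, ?_⟩
  rw [map_neg]
  have : z + DL F u1 = 0 := by
    apply cone_inj F (v := v)
    · intro s hs
      simp [sup_notMem F hzd s hs, DL_notMem F hu1d s hs]
    · intro s hs
      rw [cone_add]
      have := congrFun huz s
      rw [map_add, DL_cone F v u1 hu1d] at this
      simp only [Pi.add_apply, Pi.sub_apply, Pi.neg_apply, hu1d s hs,
        DL_notMem F (sup_notMem F hu0) s hs, sup_notMem F hw s hs] at this
      simp only [Pi.add_apply]
      linear_combination -this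
  exact (eq_neg_of_add_eq_zero_left this).symm

lemma van_del {K : Set (Finset V)} (hK : IsComplex K) (v : V) {n : ℕ}
    (h1 : Van F K n) (h2 : Van F (lkv K v) n) : Van F (del K v) n := by
  intro z hz hz0
  obtain ⟨u, hu, huz⟩ := h1 z (hz.mono F (del_sub K v)) hz0
  obtain ⟨u0, u1, hu0, hu1, rfl⟩ := decomp F v hu
  have hu1d := sup_notMem F (hu1.mono F (lkv_sub K hK v))
  rw [map_add, DL_cone F v u1 hu1d] at huz
  have h0 : DL F u1 = 0 := by
    apply cone_inj F (v := v) (DL_notMem F hu1d)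
    intro s hs
    have := congrFun huz s
    simp only [Pi.add_apply, Pi.sub_apply, hu1d s hs,
        DL_notMem F (sup_notMem F hu0) s hs, sup_notMem F hz s hs] at this
    linear_combination -this
  obtain ⟨w, hw, hwu⟩ := h2 u1 hu1 h0
  have hc0 : cone F v (0 : Finset V → F) = 0 := by funext s; simp [cone]
  refine ⟨u0 + w, hu0.add F (hw.mono F (lkv_sub K hK v)), ?_⟩
  rw [map_add, hwu, ← huz, h0, hc0, sub_zero]

/-- Faces of the link of `B` avoiding `A`. -/
def KK (X : Set (Finset V)) (A B : Finset V) : Set (Finset V) :=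
  {s | s ∪ B ∈ X ∧ Disjoint s A ∧ Disjoint s B}

lemma KK_complex (X : Set (Finset V)) (hX : IsComplex X) (A B : Finset V) :
    IsComplex (KK X A B) := by
  rintro s ⟨h1, h2, h3⟩ t ht
  exact ⟨hX _ h1 _ (Finset.union_subset_union_left ht), Finset.disjoint_of_subset_left ht h2,
    Finset.disjoint_of_subset_left ht h3⟩

lemma KK_del (X : Set (Finset V)) (A B : Finset V) (v : V) :
    del (KK X A B) v = KK X (insert v A) B := by
  ext s
  simp only [del, KK, Set.mem_setOf_eq, Finset.disjoint_insert_right]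
  tauto

lemma KK_lkv (X : Set (Finset V)) (A B : Finset V) (v : V) (hA : v ∉ A) (hB : v ∉ B) :
    lkv (KK X A B) v = KK X A (insert v B) := by
  ext s
  simp only [lkv, KK, Set.mem_setOf_eq, Finset.disjoint_insert_right,
    Finset.disjoint_insert_left, Finset.insert_union, Finset.union_insert]
  tauto

lemma KK_induce (X : Set (Finset V)) (A : Finset V) : KK X A ∅ = induce X Aᶜ := by
  ext s
  simp [KK, induce, Finset.subset_compl_iff_disjoint_right]

lemma KK_link (X : Set (Finset V)) (B : Finset V) : KK X ∅ B = link X B := by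
  ext s
  simp [KK, link]

lemma all_links (X Y : Set (Finset V)) (hX : IsComplex X) (hY : IsComplex Y) (d : ℕ)
    (h : ∀ A ∈ Y, ∀ i, d ≤ i → Van F (KK X A ∅) (i+1)) (B : Finset V) :
    ∀ A, Disjoint A B → A ∪ B ∈ Y → ∀ i, d ≤ i → Van F (KK X A B) (i+1) := by
  induction B using Finset.induction_on with
  | empty => intro A _ hA; exact h A (by simpa using hA)
  | insert v B hv ih =>
    intro A hd hA i hi
    rw [Finset.disjoint_insert_right] at hd
    rw [← KK_lkv X A B v hd.1 hv]
    apply van_link F (KK_complex X hX A B) v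
    · exact ih A hd.2 (hY _ hA _ (Finset.union_subset_union_right (Finset.subset_insert _ _)))
        (i+1) (by omega)
    · rw [KK_del]
      exact ih _ (by simp [hv, hd.2])
        (by rwa [Finset.insert_union, ← Finset.union_insert]) i hi

lemma all_dels (X Y : Set (Finset V)) (hX : IsComplex X) (hY : IsComplex Y) (d : ℕ)
    (h : ∀ B ∈ Y, ∀ i, d ≤ i → Van F (KK X ∅ B) (i+1)) (A : Finset V) :
    ∀ B, Disjoint A B → A ∪ B ∈ Y → ∀ i, d ≤ i → Van F (KK X A B) (i+1) := by
  induction A using Finset.induction_on with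
  | empty => intro A _ hA; exact h A (by simpa using hA)
  | insert v A hv ih =>
    intro B hd hA i hi
    rw [Finset.disjoint_insert_left] at hd
    rw [← KK_del X A B v]
    apply van_del F (KK_complex X hX A B) v
    · exact ih B hd.2 (hY _ hA _ (Finset.union_subset_union_left (Finset.subset_insert _ _)))
        i hi
    · rw [KK_lkv X A B v hv hd.1]
      exact ih _ (by simp [hv, hd.2])
        (by rwa [Finset.union_insert, ← Finset.insert_union]) i hi

end Aux

/-- **Relative Leray numbers via links** (Proposition 2.1).
For complexes `X, Y` on the same finite vertex set `V`,
`L_Y(X; F) = min{d : h̃_i(lk(X,σ); F) = 0 for all i ≥ d and all σ ∈ Y}`.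
(If `σ ∉ X` then `lk(X,σ)` is the void complex, all of whose reduced homology vanishes.) -/
theorem relLeray_eq_via_links
    {V : Type} [Fintype V] [LinearOrder V] (F : Type) [Field F]
    (X Y : Set (Finset V)) (hX : IsComplex X) (hY : IsComplex Y) :
    relLeray F X Y =
      sInf {d | ∀ σ ∈ Y, ∀ i : ℕ, d ≤ i → Subsingleton (RH F (link X σ) (i + 1))} := by
  unfold relLeray
  congr 1
  ext d
  simp only [Set.mem_setOf_eq]
  have e1 : ∀ (σ : Finset V) (i : ℕ),
      Subsingleton (RH F (induce X σᶜ) (i + 1)) ↔ Van F (KK X σ ∅) (i+1) := by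
    intro σ i
    rw [KK_induce, RH_iff]
    rw [← KK_induce]
    exact KK_complex X hX _ _
  have e2 : ∀ (σ : Finset V) (i : ℕ),
      Subsingleton (RH F (link X σ) (i + 1)) ↔ Van F (KK X ∅ σ) (i+1) := by
    intro σ i
    rw [KK_link, RH_iff]
    rw [← KK_link]
    exact KK_complex X hX _ _
  simp only [e1, e2]
  constructor
  · intro h σ hσ
    exact all_links F X Y hX hY d h σ ∅ (by simp) (by simpa using hσ)
  · intro h σ hσ
    exact all_dels F X Y hX hY d h σ ∅ (by simp) (by simpa using hσ)
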